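/- Let X be a real-valued Lévy process on a filtered probability space satisfying the usual conditions. Define Q^x(B) := P({X(T_x) ∈ B} ∩ {T_x < ∞}) for Borel B ⊆ ℝ, and 𝒜 := {x ∈ ℝ : Q^x is carried by a singleton, i.e. ∃ r ∈ ℝ with Q^x(ℝ \ {r}) = 0}. If 𝒜 ∩ (0,∞) ≠ ∅, then 𝒜 = ℝ. -/

import Mathlib

open MeasureTheory ProbabilityTheory Filter Set
open scoped ENNReal Topology

/-- Left limit of a path at time `t`, with the convention `f(0-) := f(0)`
(and junk `f t` for `t < 0`). -/
noncomputable def leftLimAt (f : ℝ → ℝ) (t : ℝ) : ℝ :=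
  if 0 < t then Function.leftLim f t else f t

/-- A path `f : [0,∞) → ℝ` is càdlàg: right-continuous on `[0,∞)`,
with left limits on `(0,∞)`. -/
def IsCadlag (f : ℝ → ℝ) : Prop :=
  (∀ t : ℝ, 0 ≤ t → ContinuousWithinAt f (Set.Ici t) t) ∧
  (∀ t : ℝ, 0 < t → ∃ l : ℝ, Filter.Tendsto f (nhdsWithin t (Set.Iio t)) (nhds l))

/-- `X` is a Lévy process w.r.t. the filtration `F` under `P`, on a filtered
probability space satisfying the usual conditions. -/
structure IsLevy {Ω : Type*} {m0 : MeasurableSpace Ω} (P : Measure Ω)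
    (F : MeasureTheory.Filtration ℝ m0) (X : ℝ → Ω → ℝ) : Prop where
  isProb : IsProbabilityMeasure P
  complete : P.IsComplete
  rightCont : ∀ t : ℝ, F t = ⨅ s : Set.Ioi t, F (s : ℝ)
  nullF0 : ∀ N : Set Ω, P N = 0 → MeasurableSet[F 0] N
  adapted : ∀ t : ℝ, Measurable[F t] (X t)
  start : P {ω | X 0 ω = 0} = 1
  cadlag : ∀ᵐ ω ∂P, IsCadlag (fun t => X t ω)
  indep : ∀ s t : ℝ, 0 ≤ s → s ≤ t →
    ProbabilityTheory.Indep
      (MeasurableSpace.comap (fun ω => X t ω - X s ω) inferInstance) (F s) P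
  statInc : ∀ s t : ℝ, 0 ≤ s → s ≤ t →
    Measure.map (fun ω => X t ω - X s ω) P = Measure.map (X (t - s)) P

/-- First passage time `T_x = inf{t ≥ 0 : X_t ≥ x}` (valued in `[0,∞]`, `inf ∅ = ∞`). -/
noncomputable def hitT {Ω : Type*} (X : ℝ → Ω → ℝ) (x : ℝ) (ω : Ω) : ℝ≥0∞ :=
  sInf ((fun t : ℝ => ENNReal.ofReal t) '' {t : ℝ | 0 ≤ t ∧ x ≤ X t ω})

/-- First passage time `T̂_x = inf{t ≥ 0 : X_t > x}`. -/
noncomputable def hitThat {Ω : Type*} (X : ℝ → Ω → ℝ) (x : ℝ) (ω : Ω) : ℝ≥0∞ :=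
  sInf ((fun t : ℝ => ENNReal.ofReal t) '' {t : ℝ | 0 ≤ t ∧ x < X t ω})

/-- `X(T_x)`, the position at the first passage time (junk if `T_x = ∞`). -/
noncomputable def stopVal {Ω : Type*} (X : ℝ → Ω → ℝ) (x : ℝ) (ω : Ω) : ℝ :=
  X (hitT X x ω).toReal ω

/-- `X(T̂_x)`. -/
noncomputable def stopValHat {Ω : Type*} (X : ℝ → Ω → ℝ) (x : ℝ) (ω : Ω) : ℝ :=
  X (hitThat X x ω).toReal ω

/-- `Q^x(B) = P({X(T_x) ∈ B} ∩ {T_x < ∞})`. -/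
noncomputable def Qfun {Ω : Type*} {m0 : MeasurableSpace Ω} (P : Measure Ω)
    (X : ℝ → Ω → ℝ) (x : ℝ) (B : Set ℝ) : ℝ≥0∞ :=
  P ({ω | stopVal X x ω ∈ B} ∩ {ω | hitT X x ω < ⊤})

/-- Running supremum `X̄_t = sup{X_s : s ∈ [0,t]}`. -/
noncomputable def runSup {Ω : Type*} (X : ℝ → Ω → ℝ) (t : ℝ) (ω : Ω) : ℝ :=
  sSup ((fun s => X s ω) '' Set.Icc 0 t)

/-!
Call a level `d > 0` unskipped if almost surely the path does not jump over a neighbourhood of `d`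
when it first passes above `d`; if `X(T_x) = r` almost surely, then `max x r` is unskipped. By the
Markov property the set `D` of unskipped levels is closed under addition, and it is topologically
closed in `(0, ∞)`. Moreover, if `d ∈ D` and `X` stays bounded away from `d` below it up to time
`t`, then `d - X_t ∈ D`: otherwise the increments after `t`, being independent of the past, would
carry the path over `d` with positive probability.

Hence either `D = (0, ∞)`, and then `X(T_x) = x` for every `x > 0`, or `D` has a least element `d₀`.
In the latter case a path that has not yet reached `(k + 1) d₀` is at or below `k d₀`, so that
`X(T_x) = (k + 1) d₀` whenever `k d₀ < x ≤ (k + 1) d₀`.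
-/

open scoped NNReal

section StatIndepIncrements

variable {Ω Ω' E ι κ : Type*} {m0 : MeasurableSpace Ω} {m0' : MeasurableSpace Ω'}
  {P : Measure Ω} {P' : Measure Ω'}

lemma cond_apply_of_indep [IsFiniteMeasure P] {m₁ m₂ : MeasurableSpace Ω} (hm₂ : m₂ ≤ m0)
    (h : Indep m₁ m₂ P) {A B : Set Ω} (hA : MeasurableSet[m₂] A) (hA0 : P A ≠ 0)
    (hB : MeasurableSet[m₁] B) : P[|A] B = P B := by
  rw [cond_apply (hm₂ A hA), inter_comm, (Indep_iff _ _ _).1 h B A hB hA, mul_comm (P B),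
    ← mul_assoc, ENNReal.inv_mul_cancel hA0 (measure_ne_top P A), one_mul]

lemma indep_cond_of_indep [IsFiniteMeasure P] {m₁ m₂ : MeasurableSpace Ω} (hm₂ : m₂ ≤ m0)
    (h : Indep m₁ m₂ P) {A : Set Ω} (hA : MeasurableSet[m₂] A) (hA0 : P A ≠ 0) :
    Indep m₁ m₂ P[|A] := by
  rw [Indep_iff]
  intro B C hB hC
  have h_inter : P (A ∩ (B ∩ C)) = P B * P (A ∩ C) := by
    rw [inter_left_comm]
    exact (Indep_iff _ _ _).1 h B (A ∩ C) hB (hA.inter hC)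
  rw [cond_apply_of_indep hm₂ h hA hA0 hB, cond_apply (hm₂ A hA), cond_apply (hm₂ A hA), h_inter,
    mul_left_comm]

/-- The filtration `F` observed along a monotone change of time `φ`. -/
def timeChange [Preorder ι] [Preorder κ] (F : Filtration ι m0) (φ : κ → ι) (hφ : Monotone φ) :
    Filtration κ m0 where
  seq t := F (φ t)
  mono' _ _ hst := F.mono (hφ hst)
  le' t := F.le (φ t)

/-- The increments of the path `f` after time `q`, as a path started at `0`. -/
def incrementsAfter [Sub E] (f : ℝ≥0 → E) (q : ℝ≥0) : ℝ≥0 → E := fun s ↦ f (q + s) - f q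

/-- A process adapted to `F` whose increments are stationary and independent of the past. Neither
path regularity nor the usual conditions on `F` are required; stationarity over an interval of
length zero forces `X 0 = 0` almost surely. -/
structure HasStatIndepIncrements [MeasurableSpace E] [Sub E] (P : Measure Ω)
    (F : Filtration ℝ≥0 m0) (X : ℝ≥0 → Ω → E) : Prop where
  adapted : Adapted F X
  indep (s h : ℝ≥0) :
    Indep (MeasurableSpace.comap (fun ω ↦ X (s + h) ω - X s ω) inferInstance) (F s) P
  identDistrib (s h : ℝ≥0) : IdentDistrib (fun ω ↦ X (s + h) ω - X s ω) (X h) P P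

namespace HasStatIndepIncrements

variable [MeasurableSpace E] [AddCommGroup E] {F : Filtration ℝ≥0 m0}
  {F' : Filtration ℝ≥0 m0'} {X : ℝ≥0 → Ω → E} {X' : ℝ≥0 → Ω' → E}

lemma measurable (hX : HasStatIndepIncrements P F X) (t : ℝ≥0) : Measurable (X t) :=
  (hX.adapted t).mono (F.le t) le_rfl

lemma ae_zero_eq_zero [MeasurableSingletonClass E] (hX : HasStatIndepIncrements P F X) :
    ∀ᵐ ω ∂P, X 0 ω = 0 :=
  (hX.identDistrib 0 0).ae_mem_snd (measurableSet_singleton 0) (ae_of_all _ fun ω ↦ by simp)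

lemma indepFun_restrict (hX : HasStatIndepIncrements P F X) {I : Finset ℝ≥0} {s h : ℝ≥0}
    (hI : ∀ t ∈ I, t ≤ s) :
    IndepFun (fun ω ↦ I.restrict (X · ω)) (fun ω ↦ X (s + h) ω - X s ω) P := by
  have h_past : Measurable[F s] fun ω ↦ I.restrict (X · ω) :=
    @measurable_pi_lambda _ _ _ (F s) _ _ fun t ↦
      (hX.adapted t).mono (F.mono (hI t t.2)) le_rfl
  exact (indep_of_indep_of_le_right (hX.indep s h) h_past.comap_le).symm

section Law

variable [MeasurableAdd₂ E] [IsFiniteMeasure P]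

lemma identDistrib_restrict_insert (hX : HasStatIndepIncrements P F X)
    (hX' : HasStatIndepIncrements P' F' X') (h_law : ∀ t, IdentDistrib (X t) (X' t) P P')
    {I : Finset ℝ≥0} {s m : ℝ≥0} (hs : s ∈ I) (hI : ∀ t ∈ I, t ≤ s) (hsm : s ≤ m)
    (h_past : IdentDistrib (fun ω ↦ I.restrict (X · ω)) (fun ω ↦ I.restrict (X' · ω)) P P') :
    IdentDistrib (fun ω ↦ (insert m I).restrict (X · ω))
      (fun ω ↦ (insert m I).restrict (X' · ω)) P P' := by
  have h_incr : IdentDistrib (fun ω ↦ X (s + (m - s)) ω - X s ω)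
      (fun ω ↦ X' (s + (m - s)) ω - X' s ω) P P' :=
    (hX.identDistrib s _).trans ((h_law _).trans (hX'.identDistrib s _).symm)
  let extend (p : (I → E) × E) (t : (insert m I : Finset ℝ≥0)) : E :=
    if ht : t.1 ∈ I then p.1 ⟨t, ht⟩ else p.1 ⟨s, hs⟩ + p.2
  have h_extend : Measurable extend := by
    refine measurable_pi_lambda _ fun t ↦ ?_
    by_cases ht : t.1 ∈ I <;> simp only [extend, ht, dite_true, dite_false] <;> fun_prop
  have h_restrict (f : ℝ≥0 → E) :
      (insert m I).restrict f = extend (I.restrict f, f (s + (m - s)) - f s) := by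
    ext ⟨t, ht⟩
    by_cases htI : t ∈ I
    · simp [extend, htI]
    · obtain rfl : t = m := (Finset.mem_insert.1 ht).resolve_right htI
      simp [extend, htI, add_tsub_cancel_of_le hsm]
  simp only [h_restrict]
  exact (h_past.prodMk h_incr (hX.indepFun_restrict hI) (hX'.indepFun_restrict hI)).comp h_extend

lemma identDistrib_restrict (hX : HasStatIndepIncrements P F X)
    (hX' : HasStatIndepIncrements P' F' X') (h_law : ∀ t, IdentDistrib (X t) (X' t) P P')
    (I : Finset ℝ≥0) :
    IdentDistrib (fun ω ↦ I.restrict (X · ω)) (fun ω ↦ I.restrict (X' · ω)) P P' := by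
  suffices h_zero : ∀ J : Finset ℝ≥0, IdentDistrib (fun ω ↦ (insert 0 J).restrict (X · ω))
      (fun ω ↦ (insert 0 J).restrict (X' · ω)) P P' from
    (h_zero I).comp (u := Finset.restrict₂ (π := fun _ ↦ E) (Finset.subset_insert 0 I))
      (Finset.measurable_restrict₂ _)
  intro J
  induction J using Finset.induction_on_max with
  | empty =>
    convert (h_law 0).comp (u := fun x (_ : (insert 0 ∅ : Finset ℝ≥0)) ↦ x) (by fun_prop)
      using 1 <;>
    · ext ω ⟨t, ht⟩
      obtain rfl : t = 0 := by simpa using ht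
      rfl
  | insert m J hJ ih =>
    rw [Finset.insert_comm]
    have h_mem := (insert 0 J).max'_mem (Finset.insert_nonempty 0 J)
    refine hX.identDistrib_restrict_insert hX' h_law h_mem (Finset.le_max' _) ?_ ih
    rcases Finset.mem_insert.1 h_mem with h | h
    · exact h.trans_le zero_le
    · exact (hJ _ h).le

lemma identDistrib_path (hX : HasStatIndepIncrements P F X)
    (hX' : HasStatIndepIncrements P' F' X') (h_law : ∀ t, IdentDistrib (X t) (X' t) P P') :
    IdentDistrib (fun ω t ↦ X t ω) (fun ω t ↦ X' t ω) P P' where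
  aemeasurable_fst := (measurable_pi_lambda _ hX.measurable).aemeasurable
  aemeasurable_snd := (measurable_pi_lambda _ hX'.measurable).aemeasurable
  map_eq := by
    refine (isProjectiveLimit_map (measurable_pi_lambda _ hX.measurable).aemeasurable).unique
      fun I ↦ ?_
    exact (isProjectiveLimit_map (measurable_pi_lambda _ hX'.measurable).aemeasurable I).trans
      (hX.identDistrib_restrict hX' h_law I).map_eq.symm

end Law

section Markov

variable [MeasurableSub₂ E] [IsFiniteMeasure P]

lemma identDistrib_cond_increment (hX : HasStatIndepIncrements P F X) {q s : ℝ≥0} (hqs : q ≤ s)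
    {A : Set Ω} (hA : MeasurableSet[F q] A) (hA0 : P A ≠ 0) (h : ℝ≥0) :
    IdentDistrib (fun ω ↦ X (s + h) ω - X s ω) (X h) P[|A] P where
  aemeasurable_fst := ((hX.measurable _).sub (hX.measurable _)).aemeasurable
  aemeasurable_snd := (hX.measurable h).aemeasurable
  map_eq := by
    have h_incr : Measurable fun ω ↦ X (s + h) ω - X s ω :=
      (hX.measurable (s + h)).sub (hX.measurable s)
    rw [← (hX.identDistrib s h).map_eq]
    ext B hB
    rw [Measure.map_apply h_incr hB, Measure.map_apply h_incr hB]
    exact cond_apply_of_indep (F.le s) (hX.indep s h) (F.mono hqs A hA) hA0 ⟨B, hB, rfl⟩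

lemma cond_incrementsAfter (hX : HasStatIndepIncrements P F X) {q : ℝ≥0} {A : Set Ω}
    (hA : MeasurableSet[F q] A) (hA0 : P A ≠ 0) :
    HasStatIndepIncrements P[|A] (timeChange F (q + ·) add_right_mono)
      (fun s ω ↦ incrementsAfter (X · ω) q s) where
  adapted s := (hX.adapted (q + s)).sub
    ((hX.adapted q).mono (F.mono le_self_add) le_rfl)
  indep s h := by
    simp only [incrementsAfter, sub_sub_sub_cancel_right, ← add_assoc]
    exact indep_cond_of_indep (F.le _) (hX.indep (q + s) h) (F.mono le_self_add A hA) hA0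
  identDistrib s h := by
    simp only [incrementsAfter, sub_sub_sub_cancel_right, ← add_assoc]
    exact (hX.identDistrib_cond_increment le_self_add hA hA0 h).trans
      (hX.identDistrib_cond_increment le_rfl hA hA0 h).symm

theorem measure_inter_incrementsAfter_mem [MeasurableAdd₂ E]
    (hX : HasStatIndepIncrements P F X) {q : ℝ≥0} {A : Set Ω} (hA : MeasurableSet[F q] A)
    {S : Set (ℝ≥0 → E)} (hS : MeasurableSet S) :
    P (A ∩ {ω | incrementsAfter (X · ω) q ∈ S}) = P A * P {ω | (X · ω) ∈ S} := by
  rcases eq_or_ne (P A) 0 with hA0 | hA0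
  · rw [measure_inter_null_of_null_left _ hA0, hA0, zero_mul]
  have h_law := ((hX.cond_incrementsAfter hA hA0).identDistrib_path hX
    (hX.identDistrib_cond_increment le_rfl hA hA0)).measure_mem_eq hS
  rw [← cond_mul_eq_inter (F.le q A hA), mul_comm]
  exact congrArg (P A * ·) h_law

end Markov

end HasStatIndepIncrements

end StatIndepIncrements

section Paths

/-- Right-continuity at every time `t ≥ 0`. -/
def IsRightContinuous (f : ℝ≥0 → ℝ) : Prop := ∀ t, ContinuousWithinAt f (Ici t) t

/-- The path `f` stays at or below `e` until it gets strictly above `c`. For `e < c` this means that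
`f` jumps over the whole interval `(e, c]` when it first leaves `(-∞, e]`. -/
def JumpsOver (f : ℝ≥0 → ℝ) (e c : ℝ) : Prop := ∃ t, (∀ s < t, f s ≤ e) ∧ c < f t

/-- The path `f` first passes strictly above `d` by jumping over a neighbourhood of `d`. -/
def Skips (f : ℝ≥0 → ℝ) (d : ℝ) : Prop := ∃ e c, e < d ∧ d < c ∧ JumpsOver f e c

/-- If `f` ever reaches `[x, ∞)`, then it is at `r` when it first does so. -/
def LandsAt (f : ℝ≥0 → ℝ) (x r : ℝ) : Prop := ∀ T, IsLeast {t | x ≤ f t} T → f T = r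

variable {f : ℝ≥0 → ℝ} {a b c d d' e e' c' x y r : ℝ} {q t v T : ℝ≥0}

lemma exists_nnrat_btwn (h : t < v) : ∃ q : ℚ≥0, t < q ∧ q < v := by
  obtain ⟨q, htq, hqv⟩ := exists_rat_btwn (NNReal.coe_lt_coe.2 h)
  lift q to ℚ≥0 using by exact_mod_cast t.coe_nonneg.trans htq.le
  exact ⟨q, by exact_mod_cast htq, by exact_mod_cast hqv⟩

namespace IsRightContinuous

lemma exists_forall_Ico_mem (hf : IsRightContinuous f) {U : Set ℝ} (hU : U ∈ 𝓝 (f t)) :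
    ∃ u, t < u ∧ ∀ s ∈ Ico t u, f s ∈ U :=
  mem_nhdsGE_iff_exists_Ico_subset.1 (hf t hU)

lemma exists_nnrat_mem (hf : IsRightContinuous f) {U : Set ℝ} (hU : U ∈ 𝓝 (f t)) (htv : t < v) :
    ∃ q : ℚ≥0, t < q ∧ q < v ∧ f q ∈ U := by
  obtain ⟨u, htu, hu⟩ := hf.exists_forall_Ico_mem hU
  obtain ⟨q, htq, hq⟩ := exists_nnrat_btwn (lt_min htu htv)
  exact ⟨q, htq, hq.trans_le (min_le_right u v), hu q ⟨htq.le, hq.trans_le (min_le_left u v)⟩⟩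

lemma incrementsAfter (hf : IsRightContinuous f) (q : ℝ≥0) :
    IsRightContinuous (incrementsAfter f q) := fun t ↦ by
  have h_shift : ContinuousWithinAt (q + ·) (Ici t) t := by fun_prop
  exact ((hf (q + t)).comp h_shift fun _ hs ↦ add_le_add_right (mem_Ici.1 hs) q).sub
    continuousWithinAt_const

lemma exists_isLeast (hf : IsRightContinuous f) (hx : ∃ t, x ≤ f t) :
    ∃ T, IsLeast {t | x ≤ f t} T := by
  refine ⟨sInf {t | x ≤ f t}, ?_, fun t ht ↦ csInf_le (OrderBot.bddBelow _) ht⟩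
  by_contra h_lt
  obtain ⟨u, hu, h_below⟩ := hf.exists_forall_Ico_mem (Iio_mem_nhds (not_le.1 h_lt))
  obtain ⟨s, hs : x ≤ f s, hsu⟩ := exists_lt_of_csInf_lt hx hu
  exact (mem_Iio.1 (h_below s ⟨csInf_le (OrderBot.bddBelow _) hs, hsu⟩)).not_ge hs

lemma forall_le_of_nnrat (hf : IsRightContinuous f) {q : ℚ≥0} (h : ∀ p ≤ q, f p ≤ b) :
    ∀ s ≤ (q : ℝ≥0), f s ≤ b := by
  intro s hs
  rcases hs.eq_or_lt with rfl | hsq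
  · exact h q le_rfl
  by_contra! h_gt
  obtain ⟨p, -, hpq, hp⟩ := hf.exists_nnrat_mem (Ioi_mem_nhds h_gt) hsq
  exact (h p (by exact_mod_cast hpq.le)).not_gt hp

lemma jumpsOver_iff_nnrat (hf : IsRightContinuous f) :
    JumpsOver f e c ↔ ∃ r : ℚ, c < r ∧ ∃ u : ℚ≥0, (∃ q : ℚ≥0, q < u ∧ r < f q) ∧
      ∀ q : ℚ≥0, q < u → f q ≤ e ∨ r < f q := by
  constructor
  · rintro ⟨t, h_before, hct⟩
    obtain ⟨r, hcr, hrt⟩ := exists_rat_btwn hct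
    obtain ⟨v, htv, h_after⟩ := hf.exists_forall_Ico_mem (Ioi_mem_nhds hrt)
    obtain ⟨u, htu, huv⟩ := exists_nnrat_btwn htv
    obtain ⟨q, htq, hqu⟩ := exists_nnrat_btwn htu
    refine ⟨r, hcr, u, ⟨q, by exact_mod_cast hqu, h_after q ⟨htq.le, hqu.trans huv⟩⟩,
      fun p hpu ↦ ?_⟩
    rcases lt_or_ge (p : ℝ≥0) t with hpt | htp
    · exact .inl (h_before p hpt)
    · exact .inr (h_after p ⟨htp, lt_trans (by exact_mod_cast hpu) huv⟩)
  · rintro ⟨r, hcr, u, ⟨q, hqu, hrq⟩, h_dichotomy⟩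
    obtain ⟨T, hT⟩ := hf.exists_isLeast ⟨(q : ℝ≥0), hrq.le⟩
    refine ⟨T, fun s hsT ↦ ?_, hcr.trans_le hT.1⟩
    by_contra! hes
    have hsr : f s < r := not_le.1 fun h ↦ (hT.2 h).not_gt hsT
    obtain ⟨p, -, hpT, hep, hpr⟩ := hf.exists_nnrat_mem (Ioo_mem_nhds hes hsr) hsT
    have hpq : p < q := by exact_mod_cast hpT.trans_le (hT.2 hrq.le)
    exact (h_dichotomy p (hpq.trans hqu)).elim hep.not_ge hpr.not_gt

end IsRightContinuous

lemma exists_measurableSet_jumpsOver_iff (e c : ℝ) :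
    ∃ S : Set (ℝ≥0 → ℝ), MeasurableSet S ∧
      ∀ f, IsRightContinuous f → (JumpsOver f e c ↔ f ∈ S) := by
  refine ⟨_, measurableSet_setOfPred.2 ?_, fun f hf ↦ hf.jumpsOver_iff_nnrat⟩
  fun_prop

lemma JumpsOver.mono (h : JumpsOver f e c) (he : e ≤ e') (hc : c' ≤ c) : JumpsOver f e' c' :=
  let ⟨t, h_before, ht⟩ := h
  ⟨t, fun s hs ↦ (h_before s hs).trans he, hc.trans_lt ht⟩

lemma skips_iff_rat : Skips f d ↔ ∃ e c : ℚ, e < d ∧ d < c ∧ JumpsOver f e c := by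
  refine ⟨fun ⟨e, c, hed, hdc, h⟩ ↦ ?_, fun ⟨e, c, h⟩ ↦ ⟨e, c, h⟩⟩
  obtain ⟨e', hee', he'd⟩ := exists_rat_btwn hed
  obtain ⟨c', hdc', hc'c⟩ := exists_rat_btwn hdc
  exact ⟨e', c', he'd, hdc', h.mono hee'.le hc'c.le⟩

lemma isOpen_setOf_skips : IsOpen {d | Skips f d} := by
  refine isOpen_iff_mem_nhds.2 fun d ⟨e, c, hed, hdc, h⟩ ↦ ?_
  filter_upwards [Ioo_mem_nhds hed hdc] with d' hd'
  exact ⟨e, c, hd'.1, hd'.2, h⟩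

lemma skips_of_isLeast (hT : IsLeast {t | y ≤ f t} T) (hyd : y < d) (hdT : d < f T) :
    Skips f d := by
  obtain ⟨c, hdc, hcT⟩ := exists_between hdT
  exact ⟨y, c, hyd, hdc, T, fun s hs ↦ le_of_not_ge fun h ↦ (hT.2 h).not_gt hs, hcT⟩

lemma exists_nnrat_skips_incrementsAfter (hf : IsRightContinuous f) (hd : ¬Skips f d)
    (hd' : 0 < d') (h_add : Skips f (d + d')) :
    ∃ q : ℚ≥0, Skips (incrementsAfter f q) d' := by
  obtain ⟨e, c, hed, hdc, t, h_before, hct⟩ := h_add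
  obtain ⟨y, hey, hyd⟩ : ∃ y, e - d' < y ∧ y < d := exists_between (by linarith)
  obtain ⟨T, hT⟩ := hf.exists_isLeast ⟨t, show y ≤ f t by linarith⟩
  have hyT : y ≤ f T := hT.1
  have hTd : f T ≤ d := le_of_not_gt fun h ↦ hd (skips_of_isLeast hT hyd h)
  have hTt : T < t := (hT.2 (show y ≤ f t by linarith)).lt_of_ne fun h ↦ by
    rw [h] at hTd
    linarith
  obtain ⟨q, -, hqt, heq, hqc⟩ := hf.exists_nnrat_mem
    (Ioo_mem_nhds (hey.trans_le hyT) (show f T < c - d' by linarith)) hTt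
  refine ⟨q, e - f q, c - f q, by linarith, by linarith, t - q, fun s hs ↦ ?_, ?_⟩
  · exact sub_le_sub_right (h_before _ (lt_tsub_iff_left.1 hs)) _
  · rw [incrementsAfter, add_tsub_cancel_of_le hqt.le]
    linarith

lemma skips_of_jumpsOver_incrementsAfter (hb : ∀ s ≤ q, f s ≤ b) (hbd : b < d)
    (h : JumpsOver (incrementsAfter f q) e c) (he : e < d - f q) (hc : d - f q < c) :
    Skips f d := by
  obtain ⟨t, h_before, hct⟩ := h
  refine ⟨max b (f q + e), f q + c, max_lt hbd (by linarith), by linarith, q + t, fun s hs ↦ ?_,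
    lt_sub_iff_add_lt'.1 hct⟩
  rcases le_total s q with hsq | hqs
  · exact le_max_of_le_left (hb s hsq)
  · have h_incr := h_before (s - q) ((tsub_lt_iff_left hqs).2 hs)
    rw [incrementsAfter, add_tsub_cancel_of_le hqs] at h_incr
    exact le_max_of_le_right (sub_le_iff_le_add'.1 h_incr)

lemma LandsAt.not_skips_max (hf : IsRightContinuous f) (h : LandsAt f x r) :
    ¬Skips f (max x r) := by
  rintro ⟨e, c, he, hc, t, h_before, hct⟩
  have hxt : x < f t := (le_max_left x r).trans_lt (hc.trans hct)
  obtain ⟨T, hT⟩ := hf.exists_isLeast ⟨t, hxt.le⟩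
  have hTr : f T = r := h T hT
  have hxr : max x r = r := max_eq_right (hTr ▸ hT.1)
  have hTt : T < t := (hT.2 hxt.le).lt_of_ne fun h_eq ↦ by
    rw [← h_eq] at hct
    linarith
  linarith [h_before T hTt]

lemma landsAt_zero_of_nonpos (h0 : f 0 = 0) (hx : x ≤ 0) : LandsAt f x 0 := fun T hT ↦ by
  rw [nonpos_iff_eq_zero.1 (hT.2 (show x ≤ f 0 from h0 ▸ hx)), h0]

lemma landsAt_self_of_forall_not_skips (h : ∀ y : ℚ, x < y → ¬Skips f y) :
    LandsAt f x x := fun T hT ↦ by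
  by_contra h_ne
  obtain ⟨y, hxy, hyT⟩ := exists_rat_btwn (lt_of_le_of_ne hT.1 (Ne.symm h_ne))
  exact h y hxy (skips_of_isLeast hT hxy hyT)

lemma landsAt_of_not_skips_of_gap (hf : IsRightContinuous f) (hax : a < x) (hxd : x ≤ d)
    (hd : ¬Skips f d) (h_gap : ∀ t, ∀ b < d, (∀ s ≤ t, f s ≤ b) → f t ≤ a) : LandsAt f x d := by
  have h_first {y : ℝ} {Y : ℝ≥0} (hY : IsLeast {t | y ≤ f t} Y) (hay : a < y) : d ≤ f Y := by
    by_contra! hYd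
    refine (hay.trans_le hY.1).not_ge (h_gap Y (f Y) hYd fun s hs ↦ ?_)
    by_contra! h_gt
    exact h_gt.ne (congrArg f (hs.antisymm (hY.2 (hY.1.trans h_gt.le)))).symm
  intro T hT
  obtain ⟨y, hay, hyx⟩ := exists_between hax
  obtain ⟨Y, hY⟩ := hf.exists_isLeast ⟨T, hyx.le.trans hT.1⟩
  obtain rfl : Y = T := (hY.2 (hyx.le.trans hT.1)).antisymm (hT.2 (hxd.trans (h_first hY hay)))
  exact (h_first hT hax).antisymm' <| le_of_not_gt fun h ↦
    hd (skips_of_isLeast hY (hyx.trans_le hxd) h)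

end Paths

section Levels

variable {Ω : Type*} {m0 : MeasurableSpace Ω} {P : Measure Ω} {F : Filtration ℝ≥0 m0}
  {X : ℝ≥0 → Ω → ℝ} {b d d' x y : ℝ}

lemma ae_not_skips_iff {Y : Ω → ℝ≥0 → ℝ} :
    (∀ᵐ ω ∂P, ¬Skips (Y ω) d) ↔
      ∀ e c : ℚ, e < d → d < c → P {ω | JumpsOver (Y ω) e c} = 0 := by
  simp only [skips_iff_rat, not_exists, not_and, ae_all_iff, measure_eq_zero_iff_ae_notMem,
    mem_ofPred_eq]

/-- The positive levels that almost no path skips. -/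
def unskippedLevels (P : Measure Ω) (X : ℝ≥0 → Ω → ℝ) : Set ℝ :=
  {d | 0 < d ∧ ∀ᵐ ω ∂P, ¬Skips (X · ω) d}

lemma mem_unskippedLevels_of_mem_closure (hy : y ∈ closure (unskippedLevels P X)) (hy0 : 0 < y) :
    y ∈ unskippedLevels P X := by
  obtain ⟨u, hu_mem, hu_lim⟩ := mem_closure_iff_seq_limit.1 hy
  refine ⟨hy0, ?_⟩
  filter_upwards [ae_all_iff.2 fun n ↦ (hu_mem n).2] with ω hω h_skips
  obtain ⟨n, hn⟩ := (hu_lim.eventually_mem (isOpen_setOf_skips.mem_nhds h_skips)).exists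
  exact hω n hn

lemma exists_nat_mul_lt_and_le {δ : ℝ} (hδ : 0 < δ) (hx : 0 < x) :
    ∃ k : ℕ, k * δ < x ∧ x ≤ (k + 1) * δ := by
  obtain ⟨k, hk⟩ := Nat.exists_eq_add_one.2 (Nat.ceil_pos.2 (div_pos hx hδ))
  have h_lt : (k : ℝ) < x / δ := Nat.lt_ceil.1 (by lia)
  have h_le : x / δ ≤ k + 1 := by exact_mod_cast hk ▸ Nat.le_ceil (x / δ)
  exact ⟨k, (lt_div_iff₀ hδ).1 h_lt, (div_le_iff₀ hδ).1 h_le⟩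

namespace HasStatIndepIncrements

variable [IsFiniteMeasure P]

lemma measure_inter_jumpsOver (hX : HasStatIndepIncrements P F X)
    (hright : ∀ᵐ ω ∂P, IsRightContinuous (X · ω)) {q : ℝ≥0} {A : Set Ω}
    (hA : MeasurableSet[F q] A) (e c : ℝ) :
    P (A ∩ {ω | JumpsOver (incrementsAfter (X · ω) q) e c}) =
      P A * P {ω | JumpsOver (X · ω) e c} := by
  obtain ⟨S, hS, h_iff⟩ := exists_measurableSet_jumpsOver_iff e c
  have h_path : {ω | JumpsOver (X · ω) e c} =ᵐ[P] {ω | (X · ω) ∈ S} :=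
    eventuallyEq_set.2 <| hright.mono fun ω hω ↦ h_iff _ hω
  have h_incr : {ω | JumpsOver (incrementsAfter (X · ω) q) e c} =ᵐ[P]
      {ω | incrementsAfter (X · ω) q ∈ S} :=
    eventuallyEq_set.2 <| hright.mono fun ω hω ↦ h_iff _ (hω.incrementsAfter q)
  rw [measure_congr h_path, measure_congr ((ae_eq_refl A).inter h_incr),
    hX.measure_inter_incrementsAfter_mem hA hS]

lemma ae_not_skips_incrementsAfter (hX : HasStatIndepIncrements P F X)
    (hright : ∀ᵐ ω ∂P, IsRightContinuous (X · ω)) (hd : d ∈ unskippedLevels P X) (q : ℝ≥0) :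
    ∀ᵐ ω ∂P, ¬Skips (incrementsAfter (X · ω) q) d := by
  refine ae_not_skips_iff.2 fun e c hed hdc ↦ ?_
  rw [← univ_inter {ω | _}, hX.measure_inter_jumpsOver hright .univ,
    ae_not_skips_iff.1 hd.2 e c hed hdc, mul_zero]

lemma add_mem_unskippedLevels (hX : HasStatIndepIncrements P F X)
    (hright : ∀ᵐ ω ∂P, IsRightContinuous (X · ω)) (hd : d ∈ unskippedLevels P X)
    (hd' : d' ∈ unskippedLevels P X) : d + d' ∈ unskippedLevels P X := by
  refine ⟨add_pos hd.1 hd'.1, ?_⟩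
  filter_upwards [hright, hd.2,
    ae_all_iff.2 fun q : ℚ≥0 ↦ hX.ae_not_skips_incrementsAfter hright hd' q] with ω hω hdω hd'ω h
  obtain ⟨q, hq⟩ := exists_nnrat_skips_incrementsAfter hω hdω hd'.1 h
  exact hd'ω q hq

lemma natCast_add_one_mul_mem_unskippedLevels (hX : HasStatIndepIncrements P F X)
    (hright : ∀ᵐ ω ∂P, IsRightContinuous (X · ω)) (hd : d ∈ unskippedLevels P X) (k : ℕ) :
    (k + 1) * d ∈ unskippedLevels P X := by
  induction k with
  | zero => simpa using hd
  | succ k ih =>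
    rw [Nat.cast_succ, add_one_mul]
    exact hX.add_mem_unskippedLevels hright ih hd

/-- A jump of the increments after `q` over `(e, c]` is independent of the past, and on the event to
be excluded it would make the path skip `d`. -/
lemma ae_sub_notMem_Ioo (hX : HasStatIndepIncrements P F X)
    (hright : ∀ᵐ ω ∂P, IsRightContinuous (X · ω)) (hd : ∀ᵐ ω ∂P, ¬Skips (X · ω) d) (hbd : b < d)
    (q : ℚ≥0) {e c : ℝ} (h_jump : P {ω | JumpsOver (X · ω) e c} ≠ 0) :
    ∀ᵐ ω ∂P, (∀ s ≤ (q : ℝ≥0), X s ω ≤ b) → d - X q ω ∉ Ioo e c := by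
  let A : Set Ω := (⋂ p : ℚ≥0, ⋂ _ : p ≤ q, X p ⁻¹' Iic b) ∩ (fun ω ↦ d - X q ω) ⁻¹' Ioo e c
  have h_past (p : ℚ≥0) (hp : p ≤ q) : Measurable[F q] (X p) :=
    (hX.adapted p).mono (F.mono (by exact_mod_cast hp)) le_rfl
  have hA : MeasurableSet[F q] A :=
    (MeasurableSet.iInter fun p ↦ .iInter fun hp ↦ h_past p hp measurableSet_Iic).inter
      ((h_past q le_rfl).const_sub d measurableSet_Ioo)
  have h_null : P (A ∩ {ω | JumpsOver (incrementsAfter (X · ω) q) e c}) = 0 := by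
    refine measure_eq_zero_iff_ae_notMem.2 ?_
    filter_upwards [hright, hd] with ω hω hdω ⟨⟨h_le, h_mem⟩, h_jumpω⟩
    exact hdω (skips_of_jumpsOver_incrementsAfter
      (hω.forall_le_of_nnrat fun p hp ↦ mem_iInter₂.1 h_le p hp) hbd h_jumpω h_mem.1 h_mem.2)
  rw [hX.measure_inter_jumpsOver hright hA, mul_eq_zero] at h_null
  filter_upwards [measure_eq_zero_iff_ae_notMem.1 (h_null.resolve_right h_jump)]
    with ω hω h_le h_mem
  exact hω ⟨mem_iInter₂.2 fun p hp ↦ h_le p (by exact_mod_cast hp), h_mem⟩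

lemma ae_sub_mem_unskippedLevels_of_nnrat (hX : HasStatIndepIncrements P F X)
    (hright : ∀ᵐ ω ∂P, IsRightContinuous (X · ω)) (hd : d ∈ unskippedLevels P X) (hbd : b < d)
    (q : ℚ≥0) : ∀ᵐ ω ∂P, (∀ s ≤ (q : ℝ≥0), X s ω ≤ b) → d - X q ω ∈ unskippedLevels P X := by
  have h_gap : ∀ᵐ ω ∂P, ∀ e c : ℚ, P {ω | JumpsOver (X · ω) e c} ≠ 0 →
      (∀ s ≤ (q : ℝ≥0), X s ω ≤ b) → d - X q ω ∉ Ioo (e : ℝ) c := by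
    simp only [ae_all_iff]
    exact fun e c h_jump ↦ hX.ae_sub_notMem_Ioo hright hd.2 hbd q h_jump
  filter_upwards [h_gap] with ω hω h_le
  refine ⟨by linarith [h_le q le_rfl], ae_not_skips_iff.2 fun e c he hc ↦ ?_⟩
  by_contra h_jump
  exact hω e c h_jump h_le ⟨he, hc⟩

lemma ae_sub_mem_unskippedLevels (hX : HasStatIndepIncrements P F X)
    (hright : ∀ᵐ ω ∂P, IsRightContinuous (X · ω)) (hd : d ∈ unskippedLevels P X) :
    ∀ᵐ ω ∂P, ∀ t, ∀ b < d, (∀ s ≤ t, X s ω ≤ b) → d - X t ω ∈ unskippedLevels P X := by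
  have h_rat : ∀ᵐ ω ∂P, ∀ b : ℚ, b < d → ∀ q : ℚ≥0, (∀ s ≤ (q : ℝ≥0), X s ω ≤ b) →
      d - X q ω ∈ unskippedLevels P X := by
    simp only [ae_all_iff]
    exact fun b hbd q ↦ hX.ae_sub_mem_unskippedLevels_of_nnrat hright hd hbd q
  filter_upwards [hright, h_rat] with ω hω h_ratω t b hbd h_le
  obtain ⟨b', hbb', hb'd⟩ := exists_rat_btwn hbd
  refine mem_unskippedLevels_of_mem_closure (mem_closure_iff_nhds.2 fun U hU ↦ ?_)
    (by linarith [h_le t le_rfl])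
  obtain ⟨u, htu, hu⟩ := hω.exists_forall_Ico_mem (Iio_mem_nhds ((h_le t le_rfl).trans_lt hbb'))
  have hU' : (d - ·) ⁻¹' U ∈ 𝓝 (X t ω) := (continuous_const.sub continuous_id).continuousAt hU
  obtain ⟨q, -, hqu, hqU⟩ := hω.exists_nnrat_mem hU' htu
  refine ⟨d - X q ω, hqU, h_ratω b' hb'd q fun s hs ↦ ?_⟩
  rcases le_total s t with hst | hts
  · exact (h_le s hst).trans hbb'.le
  · exact (hu s ⟨hts, hs.trans_lt hqu⟩).le

lemma exists_isLeast_or_eq_Ioi_unskippedLevels (hX : HasStatIndepIncrements P F X)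
    (hright : ∀ᵐ ω ∂P, IsRightContinuous (X · ω)) (hne : (unskippedLevels P X).Nonempty) :
    (∃ d, IsLeast (unskippedLevels P X) d) ∨ unskippedLevels P X = Ioi 0 := by
  by_cases h_small : ∀ ε > 0, ∃ δ ∈ unskippedLevels P X, δ < ε
  · refine .inr <| Subset.antisymm (fun d hd ↦ hd.1) fun y hy ↦
      mem_unskippedLevels_of_mem_closure (Metric.mem_closure_iff.2 fun ε hε ↦ ?_) hy
    obtain ⟨δ, hδ, hδε⟩ := h_small ε hε
    obtain ⟨k, hky, hyk⟩ := exists_nat_mul_lt_and_le hδ.1 hy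
    refine ⟨_, hX.natCast_add_one_mul_mem_unskippedLevels hright hδ k, ?_⟩
    rw [Real.dist_eq, abs_sub_lt_iff]
    constructor <;> linarith
  · push Not at h_small
    obtain ⟨ε, hε, h_lower⟩ := h_small
    have h_pos : 0 < sInf (unskippedLevels P X) := hε.trans_le (le_csInf hne h_lower)
    exact .inl ⟨_, mem_unskippedLevels_of_mem_closure (csInf_mem_closure hne ⟨ε, h_lower⟩) h_pos,
      fun d hd ↦ csInf_le ⟨ε, h_lower⟩ hd⟩

theorem exists_ae_landsAt (hX : HasStatIndepIncrements P F X)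
    (hright : ∀ᵐ ω ∂P, IsRightContinuous (X · ω)) (hne : (unskippedLevels P X).Nonempty)
    (x : ℝ) : ∃ r, ∀ᵐ ω ∂P, LandsAt (X · ω) x r := by
  rcases le_or_gt x 0 with hx | hx
  · exact ⟨0, hX.ae_zero_eq_zero.mono fun ω hω ↦ landsAt_zero_of_nonpos hω hx⟩
  rcases hX.exists_isLeast_or_eq_Ioi_unskippedLevels hright hne with ⟨d, hd⟩ | h_all
  · obtain ⟨k, hkx, hxk⟩ := exists_nat_mul_lt_and_le hd.1.1 hx
    have h_mem := hX.natCast_add_one_mul_mem_unskippedLevels hright hd.1 k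
    refine ⟨(k + 1) * d, ?_⟩
    filter_upwards [hright, h_mem.2, hX.ae_sub_mem_unskippedLevels hright h_mem]
      with ω hω h_not_skips h_sub
    refine landsAt_of_not_skips_of_gap hω hkx hxk h_not_skips fun t b hb h_le ↦ ?_
    linarith [hd.2 (h_sub t b hb h_le)]
  · refine ⟨x, ?_⟩
    have h_rat (y : ℚ) (hy : x < y) : ∀ᵐ ω ∂P, ¬Skips (X · ω) y :=
      (h_all.ge (hx.trans hy) : (y : ℝ) ∈ unskippedLevels P X).2
    filter_upwards [ae_all_iff.2 fun y ↦ ae_all_iff.2 (h_rat y)] with ω hω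
    exact landsAt_self_of_forall_not_skips hω

end HasStatIndepIncrements

end Levels

section FirstPassage

variable {Ω : Type*} {m0 : MeasurableSpace Ω} {P : Measure Ω} {X : ℝ → Ω → ℝ} {x r : ℝ} {ω : Ω}

lemma hitT_eq_coe_of_isLeast {T : ℝ≥0} (hT : IsLeast {t : ℝ≥0 | x ≤ X t ω} T) :
    hitT X x ω = T := by
  refine IsLeast.csInf_eq ⟨⟨T, ⟨T.coe_nonneg, hT.1⟩, ENNReal.ofReal_coe_nnreal⟩, ?_⟩
  rintro _ ⟨t, ⟨ht, hxt⟩, rfl⟩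
  lift t to ℝ≥0 using ht
  simpa using hT.2 hxt

lemma exists_le_of_hitT_lt_top (h : hitT X x ω < ⊤) : ∃ t : ℝ≥0, x ≤ X t ω := by
  obtain ⟨_, ⟨t, ⟨ht, hxt⟩, rfl⟩, -⟩ := sInf_lt_iff.1 h
  exact ⟨⟨t, ht⟩, hxt⟩

lemma landsAt_iff_stopVal_eq (hω : IsRightContinuous fun t ↦ X t ω) :
    LandsAt (fun t ↦ X t ω) x r ↔ (hitT X x ω < ⊤ → stopVal X x ω = r) := by
  constructor
  · intro h h_top
    obtain ⟨T, hT⟩ := hω.exists_isLeast (exists_le_of_hitT_lt_top h_top)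
    rw [stopVal, hitT_eq_coe_of_isLeast hT]
    exact h T hT
  · intro h T hT
    have h_hit := hitT_eq_coe_of_isLeast hT
    simpa [stopVal, h_hit] using h (h_hit ▸ ENNReal.coe_lt_top)

lemma Qfun_compl_singleton_eq_zero_iff (hright : ∀ᵐ ω ∂P, IsRightContinuous fun t ↦ X t ω) :
    Qfun P X x {r}ᶜ = 0 ↔ ∀ᵐ ω ∂P, LandsAt (fun t ↦ X t ω) x r := by
  rw [Qfun, measure_eq_zero_iff_ae_notMem]
  refine eventually_congr (hright.mono fun ω hω ↦ ?_)
  rw [landsAt_iff_stopVal_eq hω]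
  simp only [mem_inter_iff, mem_ofPred_eq, mem_compl_iff, mem_singleton_iff]
  tauto

end FirstPassage

theorem carried_by_singleton_everywhere_general {Ω : Type*} {m0 : MeasurableSpace Ω}
    (P : Measure Ω) [IsFiniteMeasure P] (F : Filtration ℝ≥0 m0) (X : ℝ → Ω → ℝ)
    (hX : HasStatIndepIncrements P F fun t ↦ X t)
    (hright : ∀ᵐ ω ∂P, IsRightContinuous fun t ↦ X t ω)
    (hA : ({x : ℝ | ∃ r : ℝ, Qfun P X x ({r}ᶜ) = 0} ∩ Ioi (0 : ℝ)).Nonempty) :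
    {x : ℝ | ∃ r : ℝ, Qfun P X x ({r}ᶜ) = 0} = univ := by
  simp only [Qfun_compl_singleton_eq_zero_iff hright] at hA ⊢
  obtain ⟨x, ⟨r, h_lands⟩, hx⟩ := hA
  have h_unskipped : max x r ∈ unskippedLevels P fun t ↦ X t :=
    ⟨lt_max_of_lt_left hx, by filter_upwards [hright, h_lands] with ω hω h using h.not_skips_max hω⟩
  exact eq_univ_of_forall (hX.exists_ae_landsAt hright ⟨_, h_unskipped⟩)

section Levy

variable {Ω : Type*} {m0 : MeasurableSpace Ω} {P : Measure Ω} {F : Filtration ℝ m0}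
  {X : ℝ → Ω → ℝ}

lemma IsLevy.measurable (hX : IsLevy P F X) (t : ℝ) : Measurable (X t) :=
  (hX.adapted t).mono (F.le t) le_rfl

lemma IsLevy.hasStatIndepIncrements (hX : IsLevy P F X) :
    HasStatIndepIncrements P (timeChange F ((↑) : ℝ≥0 → ℝ) NNReal.coe_mono) fun t ↦ X t where
  adapted t := hX.adapted t
  indep s h := hX.indep s ↑(s + h) s.coe_nonneg (by simp)
  identDistrib s h :=
    { aemeasurable_fst := ((hX.measurable _).sub (hX.measurable _)).aemeasurable
      aemeasurable_snd := (hX.measurable h).aemeasurable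
      map_eq := by simpa using hX.statInc s ↑(s + h) s.coe_nonneg (by simp) }

lemma IsCadlag.isRightContinuous {f : ℝ → ℝ} (hf : IsCadlag f) :
    IsRightContinuous fun t ↦ f t := fun t ↦
  (hf.1 t t.coe_nonneg).comp NNReal.continuous_coe.continuousWithinAt
    fun _ hs ↦ NNReal.coe_le_coe.2 hs

end Levy

/-- If `Q^x` is carried by a singleton for some `x > 0`, then it is so for every `x ∈ ℝ`. -/
theorem carried_by_singleton_everywhere {Ω : Type*} {m0 : MeasurableSpace Ω}
    (P : Measure Ω) (F : MeasureTheory.Filtration ℝ m0) (X : ℝ → Ω → ℝ)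
    (hX : IsLevy P F X)
    (hA : ({x : ℝ | ∃ r : ℝ, Qfun P X x ({r}ᶜ) = 0} ∩ Set.Ioi (0 : ℝ)).Nonempty) :
    {x : ℝ | ∃ r : ℝ, Qfun P X x ({r}ᶜ) = 0} = Set.univ := by
  have := hX.isProb
  exact carried_by_singleton_everywhere_general P _ X hX.hasStatIndepIncrements
    (hX.cadlag.mono fun _ hω ↦ hω.isRightContinuous) hA
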